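/- Assume in addition that M is positive definite and d₁ ≥ 3, that tr(W) − 2·‖W‖ > 0, and that 0 ≤ γ ≤ 2·(tr(W) − 2·‖W‖). Then E[‖Ψ(γ)‖²_Υ] ≤ tr(Υ·Γ₁·Ω·Γ₁ᵀ) − γ·(2·(tr(W) − 2·‖W‖) − γ)·E[1/Q]. -/

import Mathlib

/-!
The proof is Stein's: expand the loss, and bound the cross term by Gaussian integration by parts.

Write `ξ = A z` with `z` standard Gaussian and factor `Υ = Sᵀ S`. With `D = Γ₁ - Γ`,
`y = S D (A z + τ)` and `C = S Γ₁ A`, the assumption `Γ₁ τ = 0` gives `Q = ‖y‖²` and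
`S Ψ = C z - (γ / Q) y`, so that `‖Ψ‖²_Υ = ‖C z‖² - 2 γ ⟪y, C z⟫ / Q + γ² / Q`.
Here `E‖C z‖² = tr(C Cᵀ) = tr(Υ Γ₁ Ω Γ₁ᵀ)`, and what remains is
`E[⟪y, C z⟫ / Q] ≥ (tr W - 2 ‖W‖) E[1 / Q]`, which is `stein_quad`.

The estimate is Stein's identity (`stein_pi`) for the field `Cᵀ y / Q`, whose divergence is
`tr(C Bᵀ) / Q - 2 yᵀ C Bᵀ y / Q²` with `B = S D A`. The covariance assumption gives
`C Bᵀ = S M Sᵀ`, which has the same trace as `W = Υ M`, and the same eigenvalues, so that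
`yᵀ C Bᵀ y ≤ ‖W‖ Q` (`spectral_bound`). The singularity at `Q = 0` is handled by replacing `Q` with
`Q + ε` (`stein_reg`) and letting `ε → 0`. The positivity of `tr W - 2 ‖W‖` turns the regularised
estimate into a uniform bound on `E[1 / (Q + ε)]`, hence into the integrability of `1 / Q`; no
separate argument about inverse moments of Gaussian vectors is needed.
-/

open Matrix MeasureTheory ProbabilityTheory

/-- The standard Gaussian measure on `ℝ^m` (iid standard normal coordinates). -/
noncomputable def stdGaussian (m : ℕ) : Measure (Fin m → ℝ) :=
  Measure.pi fun _ => gaussianReal 0 1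

/-- `μ` is the multivariate Gaussian law on `ℝ^m` with mean `mean` and covariance
matrix `V`, i.e. the law of `mean + A ζ` for a standard Gaussian `ζ` and any matrix
`A` with `A Aᵀ = V`. -/
def IsGaussianLaw {m : ℕ} (μ : Measure (Fin m → ℝ)) (mean : Fin m → ℝ)
    (V : Matrix (Fin m) (Fin m) ℝ) : Prop :=
  ∃ A : Matrix (Fin m) (Fin m) ℝ, A * Aᵀ = V ∧
    μ = Measure.map (fun x => mean + A.mulVec x) (stdGaussian m)

/-- The operator (spectral) norm of a real square matrix. -/
noncomputable def matOpNorm {n : ℕ} (A : Matrix (Fin n) (Fin n) ℝ) : ℝ :=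
  ‖Matrix.toEuclideanCLM (𝕜 := ℝ) A‖

open Filter Topology

/-! ### Stein's identity and second moments -/

/-- Stein's identity `E[X f(X)] = E[f'(X)]` for `X ∼ N(0, 1)`: integration by parts against the
Gaussian density `φ`, using `φ'(x) = -x φ(x)`. -/
theorem stein_one {f f' : ℝ → ℝ} (hf : ∀ x, HasDerivAt f (f' x) x)
    (h0 : Integrable f (gaussianReal 0 1)) (h1 : Integrable (fun x => x * f x) (gaussianReal 0 1))
    (h2 : Integrable f' (gaussianReal 0 1)) :
    ∫ x, x * f x ∂(gaussianReal 0 1) = ∫ x, f' x ∂(gaussianReal 0 1) := by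
  have hd : ∀ x, HasDerivAt (gaussianPDFReal 0 1) (-x * gaussianPDFReal 0 1 x) x := by
    intro x
    have h : HasDerivAt (fun x : ℝ => -(x - 0) ^ 2 / (2 * ((1 : NNReal) : ℝ))) (-x) x := by
      have := ((((hasDerivAt_id x).sub_const 0).pow 2).neg.div_const (2 * ((1 : NNReal) : ℝ)))
      refine this.congr_deriv ?_
      simp
      ring
    rw [gaussianPDFReal_def]
    refine (h.exp.const_mul _).congr_deriv ?_
    ring
  have key : ∀ g : ℝ → ℝ, Integrable g (gaussianReal 0 1) →
      Integrable (fun x => gaussianPDFReal 0 1 x * g x) := by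
    intro g hg
    rw [gaussianReal_of_var_ne_zero _ one_ne_zero,
      integrable_withDensity_iff_integrable_smul' (measurable_gaussianPDF 0 1)
        (by simp [gaussianPDF])] at hg
    simpa [gaussianPDF, ENNReal.toReal_ofReal, gaussianPDFReal_nonneg] using hg
  rw [integral_gaussianReal_eq_integral_smul one_ne_zero,
    integral_gaussianReal_eq_integral_smul one_ne_zero]
  simp only [smul_eq_mul]
  rw [integral_mul_deriv_eq_deriv_mul_of_integrable (u := gaussianPDFReal 0 1) (v := f)
    (fun x _ => hd x) (fun x _ => hf x) (key _ h2) ?_ (key _ h0), ← integral_neg]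
  · congr 1; ext x; ring
  · refine (key _ h1).neg.congr (ae_of_all _ fun x => ?_)
    simp; ring

/-- Stein's identity in the `i`-th coordinate of a standard Gaussian vector; `F'` plays the role of
the partial derivative `∂ᵢF`. Conditionally on the other coordinates it is `stein_one`. -/
theorem stein_pi {m : ℕ} (i : Fin m) {F F' : (Fin m → ℝ) → ℝ}
    (hF : ∀ z, HasDerivAt (fun t => F (Function.update z i t)) (F' z) (z i))
    (h0 : Integrable F (_root_.stdGaussian m))
    (h1 : Integrable (fun z => z i * F z) (_root_.stdGaussian m))
    (h2 : Integrable F' (_root_.stdGaussian m)) :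
    ∫ z, z i * F z ∂(_root_.stdGaussian m) = ∫ z, F' z ∂(_root_.stdGaussian m) := by
  obtain _ | n := m
  · exact i.elim0
  have mp := (measurePreserving_piFinSuccAbove (fun _ : Fin (n + 1) => gaussianReal 0 1) i).symm
  set e := (MeasurableEquiv.piFinSuccAbove (fun _ : Fin (n + 1) => ℝ) i).symm with he
  have hi : ∀ p, e p = i.insertNth p.1 p.2 := fun p => rfl
  have tr : ∀ G : (Fin (n + 1) → ℝ) → ℝ, Integrable G (_root_.stdGaussian (n + 1)) →
      Integrable (fun p : ℝ × (Fin n → ℝ) => G (i.insertNth p.1 p.2))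
        ((gaussianReal 0 1).prod (Measure.pi fun _ : Fin n => gaussianReal 0 1)) := fun G hG =>
    mp.integrable_comp_of_integrable hG
  have tr' : ∀ G : (Fin (n + 1) → ℝ) → ℝ, Integrable G (_root_.stdGaussian (n + 1)) →
      ∫ z, G z ∂(_root_.stdGaussian (n + 1)) = ∫ w, ∫ t, G (i.insertNth t w)
        ∂(gaussianReal 0 1) ∂(Measure.pi fun _ : Fin n => gaussianReal 0 1) := by
    intro G hG
    rw [← integral_prod_symm _ (tr G hG)]
    exact (mp.integral_comp' G).symm
  rw [tr' _ h1, tr' _ h2]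
  refine integral_congr_ae ?_
  filter_upwards [(tr _ h0).prod_left_ae, (tr _ h1).prod_left_ae, (tr _ h2).prod_left_ae]
    with w k0 k1 k2
  simp only [Fin.insertNth_apply_same] at k1 ⊢
  refine stein_one (fun t => ?_) k0 k1 k2
  simpa using hF (i.insertNth t w)

instance {m : ℕ} : IsProbabilityMeasure (_root_.stdGaussian m) := by
  unfold _root_.stdGaussian; infer_instance

theorem memLp_coord {m : ℕ} (i : Fin m) : MemLp (fun z => z i) 2 (_root_.stdGaussian m) :=
  (memLp_id_gaussianReal' (μ := 0) (v := 1) 2 (by simp)).comp_measurePreserving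
    (measurePreserving_eval (fun _ : Fin m => gaussianReal 0 1) i)

theorem integrable_coord {m : ℕ} (i : Fin m) :
    Integrable (fun z => z i) (_root_.stdGaussian m) :=
  (memLp_coord i).integrable (by norm_num)

theorem integrable_coord_mul {m : ℕ} (i j : Fin m) :
    Integrable (fun z => z i * z j) (_root_.stdGaussian m) :=
  (memLp_coord i).integrable_mul (memLp_coord j)

theorem integral_coord_mul {m : ℕ} (i j : Fin m) :
    ∫ z, z i * z j ∂(_root_.stdGaussian m) = if i = j then 1 else 0 := by
  rw [stein_pi (F' := fun _ => if i = j then 1 else 0) i ?_ (integrable_coord j)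
    (integrable_coord_mul i j) (integrable_const _)]
  · simp
  · intro z
    refine ((hasDerivAt_pi.1 (hasDerivAt_update z i (z i))) j).congr_deriv ?_
    simp [Pi.single_apply, eq_comm]

theorem linear_sq {m d : ℕ} (C : Matrix (Fin d) (Fin m) ℝ) (z : Fin m → ℝ) :
    C *ᵥ z ⬝ᵥ C *ᵥ z = ∑ k, ∑ i, ∑ j, C k i * C k j * (z i * z j) := by
  simp only [dotProduct, Matrix.mulVec, Finset.sum_mul_sum]
  refine Finset.sum_congr rfl fun k _ => Finset.sum_congr rfl fun i _ =>
    Finset.sum_congr rfl fun j _ => by ring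

theorem integrable_linear_sq {m d : ℕ} (C : Matrix (Fin d) (Fin m) ℝ) :
    Integrable (fun z => C *ᵥ z ⬝ᵥ C *ᵥ z) (_root_.stdGaussian m) := by
  simp only [linear_sq]
  exact integrable_finsetSum _ fun k _ => integrable_finsetSum _ fun i _ =>
    integrable_finsetSum _ fun j _ => (integrable_coord_mul i j).const_mul _

theorem integral_linear_sq {m d : ℕ} (C : Matrix (Fin d) (Fin m) ℝ) :
    ∫ z, C *ᵥ z ⬝ᵥ C *ᵥ z ∂(_root_.stdGaussian m) = (C * Cᵀ).trace := by
  have h : ∀ k i j, Integrable (fun z : Fin m → ℝ => C k i * C k j * (z i * z j))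
    (_root_.stdGaussian m) := fun k i j => (integrable_coord_mul i j).const_mul _
  simp only [linear_sq]
  rw [integral_finsetSum _ fun k _ => integrable_finsetSum _ fun i _ =>
    integrable_finsetSum _ fun j _ => h k i j]
  simp only [Matrix.trace, Matrix.diag, Matrix.mul_apply, Matrix.transpose_apply]
  refine Finset.sum_congr rfl fun k _ => ?_
  rw [integral_finsetSum _ fun i _ => integrable_finsetSum _ fun j _ => h k i j]
  refine Finset.sum_congr rfl fun i _ => ?_
  rw [integral_finsetSum _ fun j _ => h k i j]
  simp [integral_const_mul, integral_coord_mul]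

/-! ### Matrix facts -/

/-- For symmetric `M`, the quadratic form of `S M Sᵀ` is bounded by the spectral norm of
`Sᵀ S M`. The latter matrix need not be symmetric, but it is similar to `S M Sᵀ`
(`Sᵀ` carries eigenvectors to eigenvectors), so its norm dominates every eigenvalue of `S M Sᵀ`. -/
theorem spectral_bound {d : ℕ} (S M : Matrix (Fin d) (Fin d) ℝ) (hS : IsUnit S.det)
    (hM : M.IsSymm) (v : Fin d → ℝ) :
    v ⬝ᵥ (S * M * Sᵀ) *ᵥ v ≤ matOpNorm (Sᵀ * S * M) * (v ⬝ᵥ v) := by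
  set w := matOpNorm (Sᵀ * S * M) with hw
  set N := S * M * Sᵀ with hN
  have hNs : N.IsHermitian := by
    rw [Matrix.IsHermitian, Matrix.conjTranspose_eq_transpose_of_trivial, hN]
    simp [Matrix.transpose_mul, hM.eq, Matrix.mul_assoc]
  have hH : (w • (1 : Matrix (Fin d) (Fin d) ℝ) - N).IsHermitian := by
    refine Matrix.IsHermitian.sub ?_ hNs
    simp [Matrix.IsHermitian]
  have hpsd : (w • (1 : Matrix (Fin d) (Fin d) ℝ) - N).PosSemidef := by
    rw [hH.posSemidef_iff_eigenvalues_nonneg]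
    intro j
    have hv := hH.mulVec_eigenvectorBasis j
    have hvn : (hH.eigenvectorBasis j) ≠ 0 := hH.eigenvectorBasis.orthonormal.ne_zero j
    set u : Fin d → ℝ := ⇑(hH.eigenvectorBasis j) with hu
    have hu0 : u ≠ 0 := fun h => hvn (by ext k; exact congrFun h k)
    set l := hH.eigenvalues j
    have hNu : N *ᵥ u = (w - l) • u := by
      rw [Matrix.sub_mulVec, Matrix.smul_mulVec, Matrix.one_mulVec] at hv
      rw [sub_smul, ← hv]; simp
    have hW : (Sᵀ * S * M) *ᵥ (Sᵀ *ᵥ u) = (w - l) • (Sᵀ *ᵥ u) := by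
      rw [← Matrix.mulVec_smul, ← hNu, hN]
      simp only [Matrix.mulVec_mulVec, Matrix.mul_assoc]
    have hne : Sᵀ *ᵥ u ≠ 0 := by
      intro h
      apply hu0
      have hS' : IsUnit Sᵀ.det := by rwa [Matrix.det_transpose]
      have := congrArg (fun x => (Sᵀ)⁻¹ *ᵥ x) h
      simpa [Matrix.mulVec_mulVec, Matrix.nonsing_inv_mul _ hS'] using this
    have hb := (Matrix.toEuclideanCLM (𝕜 := ℝ) (Sᵀ * S * M)).le_opNorm (WithLp.toLp 2 (Sᵀ *ᵥ u))
    rw [Matrix.toEuclideanCLM_toLp, hW, WithLp.toLp_smul, norm_smul] at hb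
    have hp : 0 < ‖WithLp.toLp 2 (Sᵀ *ᵥ u)‖ := norm_pos_iff.2 (by simpa using hne)
    have := le_of_mul_le_mul_right hb hp
    have h3 := (le_abs_self _).trans this
    change w - l ≤ w at h3
    simp only [Pi.zero_apply]
    linarith
  have := hpsd.dotProduct_mulVec_nonneg v
  simp [Matrix.sub_mulVec, Matrix.smul_mulVec, dotProduct_sub] at this
  linarith

theorem dot_self_nonneg {d : ℕ} (v : Fin d → ℝ) : 0 ≤ v ⬝ᵥ v :=
  Finset.sum_nonneg fun i _ => mul_self_nonneg (v i)

open scoped MatrixOrder Matrix.Norms.L2Operator in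
/-- A positive semidefinite real matrix has the form `Sᵀ S`. -/
theorem exists_factor {d : ℕ} {U : Matrix (Fin d) (Fin d) ℝ} (hU : U.PosSemidef) :
    ∃ S : Matrix (Fin d) (Fin d) ℝ, U = Sᵀ * S := by
  obtain ⟨S, hS⟩ := CStarAlgebra.nonneg_iff_eq_star_mul_self.mp hU.nonneg
  refine ⟨S, ?_⟩
  rwa [Matrix.star_eq_conjTranspose, Matrix.conjTranspose_eq_transpose_of_trivial] at hS

/-! ### The Stein estimate -/

/-- A linear form divided by `‖y‖² + ε` is bounded; this makes the regularised Stein field bounded. -/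
theorem lin_div_bound {d : ℕ} (a y : Fin d → ℝ) {ε : ℝ} (hε : 0 < ε) :
    |(a ⬝ᵥ y) / (y ⬝ᵥ y + ε)| ≤ 1 + (a ⬝ᵥ a) / ε := by
  have hy : 0 ≤ y ⬝ᵥ y := dot_self_nonneg y
  have ha : 0 ≤ a ⬝ᵥ a := dot_self_nonneg a
  have h1 : 0 ≤ (a - y) ⬝ᵥ (a - y) := dot_self_nonneg _
  have h2 : 0 ≤ (a + y) ⬝ᵥ (a + y) := dot_self_nonneg _
  simp only [sub_dotProduct, dotProduct_sub, add_dotProduct, dotProduct_add,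
    dotProduct_comm y a] at h1 h2
  have hp : 0 < y ⬝ᵥ y + ε := by linarith
  have h3 : |a ⬝ᵥ y| ≤ a ⬝ᵥ a + y ⬝ᵥ y := by
    rw [abs_le]; constructor <;> linarith
  rw [abs_div, abs_of_pos hp, div_le_iff₀ hp]
  have h4 : (1 + (a ⬝ᵥ a) / ε) * (y ⬝ᵥ y + ε)
      = y ⬝ᵥ y + ε + a ⬝ᵥ a + (a ⬝ᵥ a) / ε * (y ⬝ᵥ y) := by
    field_simp; ring
  have h5 : 0 ≤ (a ⬝ᵥ a) / ε * (y ⬝ᵥ y) := by positivity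
  linarith

theorem continuous_affine {m d : ℕ} (B : Matrix (Fin d) (Fin m) ℝ) (b : Fin d → ℝ) :
    Continuous fun z : Fin m → ℝ => B *ᵥ z + b :=
  (Continuous.matrix_mulVec continuous_const continuous_id).add continuous_const

/-- The Stein estimate for the regularised field `z ↦ Cᵀ y(z) / (‖y(z)‖² + ε)`, where
`y(z) = B z + b`. Its divergence is
`tr(C Bᵀ) / (‖y‖² + ε) - 2 yᵀ C Bᵀ y / (‖y‖² + ε)²`, which is at least
`(tr(C Bᵀ) - 2 w) / (‖y‖² + ε)` when `C Bᵀ` has quadratic form at most `w ‖·‖²`. -/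
theorem stein_reg {m d : ℕ} (B C : Matrix (Fin d) (Fin m) ℝ) (b : Fin d → ℝ) {w : ℝ}
    (hw : 0 ≤ w) (hN : ∀ v, v ⬝ᵥ (C * Bᵀ) *ᵥ v ≤ w * (v ⬝ᵥ v))
    (y : (Fin m → ℝ) → Fin d → ℝ) (hy : y = fun z => B *ᵥ z + b) {ε : ℝ} (hε : 0 < ε) :
    Integrable (fun z => 1 / (y z ⬝ᵥ y z + ε)) (_root_.stdGaussian m) ∧
    Integrable (fun z => (y z ⬝ᵥ C *ᵥ z) / (y z ⬝ᵥ y z + ε)) (_root_.stdGaussian m) ∧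
    ((C * Bᵀ).trace - 2 * w) * ∫ z, 1 / (y z ⬝ᵥ y z + ε) ∂(_root_.stdGaussian m)
      ≤ ∫ z, (y z ⬝ᵥ C *ᵥ z) / (y z ⬝ᵥ y z + ε) ∂(_root_.stdGaussian m) := by
  have hyc : Continuous y := hy ▸ continuous_affine B b
  have hQ0 : ∀ z, 0 ≤ y z ⬝ᵥ y z := fun z => dot_self_nonneg _
  have hQ : ∀ z, 0 < y z ⬝ᵥ y z + ε := fun z => by linarith [hQ0 z]
  have hQne : ∀ z, y z ⬝ᵥ y z + ε ≠ 0 := fun z => (hQ z).ne'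
  have hQc : Continuous fun z => y z ⬝ᵥ y z + ε := (hyc.dotProduct hyc).add continuous_const
  have hinvc : Continuous fun z => 1 / (y z ⬝ᵥ y z + ε) := continuous_const.div hQc hQne
  have hinvb : ∀ z, |1 / (y z ⬝ᵥ y z + ε)| ≤ 1 / ε := fun z => by
    rw [abs_of_pos (one_div_pos.2 (hQ z))]
    exact one_div_le_one_div_of_le hε (by linarith [hQ0 z])
  have hlc : ∀ a : Fin d → ℝ, Continuous fun z => (a ⬝ᵥ y z) / (y z ⬝ᵥ y z + ε) := fun a =>
    (continuous_const.dotProduct hyc).div hQc hQne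
  have hlb : ∀ (a : Fin d → ℝ) z, ‖(a ⬝ᵥ y z) / (y z ⬝ᵥ y z + ε)‖ ≤ 1 + (a ⬝ᵥ a) / ε :=
    fun a z => lin_div_bound a (y z) hε
  have hli : ∀ a : Fin d → ℝ, Integrable (fun z => (a ⬝ᵥ y z) / (y z ⬝ᵥ y z + ε))
      (_root_.stdGaussian m) := fun a =>
    Integrable.of_bound (hlc a).aestronglyMeasurable _ (ae_of_all _ (hlb a))
  have hinv : Integrable (fun z => 1 / (y z ⬝ᵥ y z + ε)) (_root_.stdGaussian m) :=
    Integrable.of_bound hinvc.aestronglyMeasurable _ (ae_of_all _ hinvb)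
  set F : Fin m → (Fin m → ℝ) → ℝ := fun i z => (Cᵀ i ⬝ᵥ y z) / (y z ⬝ᵥ y z + ε) with hF
  set F' : Fin m → (Fin m → ℝ) → ℝ := fun i z =>
    (Cᵀ i ⬝ᵥ Bᵀ i) * (1 / (y z ⬝ᵥ y z + ε)) - 2 * ((Cᵀ i ⬝ᵥ y z) / (y z ⬝ᵥ y z + ε) *
      ((Bᵀ i ⬝ᵥ y z) / (y z ⬝ᵥ y z + ε))) with hF'
  have hd : ∀ i z, HasDerivAt (fun t => F i (Function.update z i t)) (F' i z) (z i) := by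
    intro i z
    have hyk : ∀ k, HasDerivAt (fun t => y (Function.update z i t) k) (B k i) (z i) := by
      intro k
      rw [hy]
      simp only [Matrix.mulVec, dotProduct, Pi.add_apply]
      refine ((HasDerivAt.fun_sum fun j _ =>
        ((hasDerivAt_pi.1 (hasDerivAt_update z i (z i))) j).const_mul (B k j)).add_const
          (b k)).congr_deriv ?_
      simp [Pi.single_apply]
    have hnum : HasDerivAt (fun t => Cᵀ i ⬝ᵥ y (Function.update z i t)) (Cᵀ i ⬝ᵥ Bᵀ i) (z i) :=
      HasDerivAt.fun_sum fun k _ => (hyk k).const_mul _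
    have hden : HasDerivAt (fun t => y (Function.update z i t) ⬝ᵥ y (Function.update z i t) + ε)
        (2 * (Bᵀ i ⬝ᵥ y z)) (z i) := by
      refine ((HasDerivAt.fun_sum fun k _ => (hyk k).mul (hyk k)).add_const ε).congr_deriv ?_
      simp only [Function.update_eq_self, dotProduct, Finset.mul_sum, Matrix.transpose_apply]
      exact Finset.sum_congr rfl fun k _ => by ring
    refine (hnum.div hden (hQne _)).congr_deriv ?_
    simp only [Function.update_eq_self, hF']
    have := hQne z
    field_simp
  have hF0 : ∀ i, Integrable (F i) (_root_.stdGaussian m) := fun i => hli _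
  have hF1 : ∀ i, Integrable (fun z => z i * F i z) (_root_.stdGaussian m) := fun i =>
    (integrable_coord i).mul_bdd (hlc _).aestronglyMeasurable (ae_of_all _ (hlb _))
  have hF2 : ∀ i, Integrable (F' i) (_root_.stdGaussian m) := fun i =>
    (hinv.const_mul _).sub (((hli _).mul_bdd (hlc _).aestronglyMeasurable
      (ae_of_all _ (hlb _))).const_mul _)
  have hsum : ∀ z, (y z ⬝ᵥ C *ᵥ z) / (y z ⬝ᵥ y z + ε) = ∑ i, z i * F i z := by
    intro z
    simp only [hF, ← mul_div_assoc, ← Finset.sum_div]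
    congr 1
    simp only [dotProduct, Matrix.mulVec, Finset.mul_sum, Matrix.transpose_apply]
    rw [Finset.sum_comm]
    exact Finset.sum_congr rfl fun i _ => Finset.sum_congr rfl fun k _ => by ring
  have hsum' : ∀ z, ∑ i, F' i z = (C * Bᵀ).trace * (1 / (y z ⬝ᵥ y z + ε)) -
      2 * (y z ⬝ᵥ (C * Bᵀ) *ᵥ y z) / (y z ⬝ᵥ y z + ε) ^ 2 := by
    intro z
    simp only [hF', Finset.sum_sub_distrib, ← Finset.sum_mul, ← Finset.mul_sum]
    congr 1
    · congr 1
      simp only [Matrix.trace, Matrix.diag, Matrix.mul_apply, dotProduct, Matrix.transpose_apply]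
      exact Finset.sum_comm
    · have : y z ⬝ᵥ (C * Bᵀ) *ᵥ y z = ∑ i, (Cᵀ i ⬝ᵥ y z) * (Bᵀ i ⬝ᵥ y z) := by
        rw [← Matrix.mulVec_mulVec, Matrix.dotProduct_mulVec, ← Matrix.mulVec_transpose]
        rfl
      rw [this, mul_div_assoc, Finset.sum_div]
      congr 1
      refine Finset.sum_congr rfl fun i _ => ?_
      have := hQne z
      field_simp
  have hIe : ∫ z, (y z ⬝ᵥ C *ᵥ z) / (y z ⬝ᵥ y z + ε) ∂(_root_.stdGaussian m)
      = ∫ z, ∑ i, F' i z ∂(_root_.stdGaussian m) := by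
    simp only [hsum]
    rw [integral_finsetSum _ fun i _ => hF1 i, integral_finsetSum _ fun i _ => hF2 i]
    exact Finset.sum_congr rfl fun i _ => stein_pi i (hd i) (hF0 i) (hF1 i) (hF2 i)
  refine ⟨hinv, ?_, ?_⟩
  · simp only [hsum]
    exact integrable_finsetSum _ fun i _ => hF1 i
  · rw [hIe, ← integral_const_mul]
    refine integral_mono (hinv.const_mul _) (integrable_finsetSum _ fun i _ => hF2 i) fun z => ?_
    simp only [hsum']
    have h1 : 2 * (y z ⬝ᵥ (C * Bᵀ) *ᵥ y z) / (y z ⬝ᵥ y z + ε) ^ 2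
        ≤ 2 * w * (1 / (y z ⬝ᵥ y z + ε)) := by
      rw [mul_one_div, div_le_div_iff₀ (pow_pos (hQ z) 2) (hQ z)]
      have h2 : y z ⬝ᵥ (C * Bᵀ) *ᵥ y z ≤ w * (y z ⬝ᵥ y z + ε) :=
        (hN (y z)).trans (mul_le_mul_of_nonneg_left (by linarith) hw)
      nlinarith [mul_le_mul_of_nonneg_right h2 (hQ z).le]
    linarith

/-- The limit `ε → 0` of `stein_reg`. The integrability of `1 / ‖y‖²` comes out of the estimate
itself, because `c = tr(C Bᵀ) - 2 w` is positive: the right side of `stein_reg` is at most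
`(c / 2) E[1 / (‖y‖² + ε)] + E[‖C z‖²] / (2 c)`, so `E[1 / (‖y‖² + ε)]` is bounded uniformly in `ε`. -/
theorem stein_quad {m d : ℕ} (B C : Matrix (Fin d) (Fin m) ℝ) (b : Fin d → ℝ) {w c : ℝ}
    (hw : 0 ≤ w) (hN : ∀ v, v ⬝ᵥ (C * Bᵀ) *ᵥ v ≤ w * (v ⬝ᵥ v))
    (hc : c = (C * Bᵀ).trace - 2 * w) (hc0 : 0 < c)
    (y : (Fin m → ℝ) → Fin d → ℝ) (hy : y = fun z => B *ᵥ z + b) :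
    Integrable (fun z => 1 / (y z ⬝ᵥ y z)) (_root_.stdGaussian m) ∧
    Integrable (fun z => (y z ⬝ᵥ C *ᵥ z) / (y z ⬝ᵥ y z)) (_root_.stdGaussian m) ∧
    c * ∫ z, 1 / (y z ⬝ᵥ y z) ∂(_root_.stdGaussian m)
      ≤ ∫ z, (y z ⬝ᵥ C *ᵥ z) / (y z ⬝ᵥ y z) ∂(_root_.stdGaussian m) := by
  have hyc : Continuous y := hy ▸ continuous_affine B b
  have hQ0 : ∀ z, 0 ≤ y z ⬝ᵥ y z := fun z => dot_self_nonneg _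
  set e : ℕ → ℝ := fun n => 1 / ((n : ℝ) + 1) with he
  have hep : ∀ n, 0 < e n := fun n => Nat.one_div_pos_of_nat
  have hel : Tendsto e atTop (𝓝 0) := tendsto_one_div_add_atTop_nhds_zero_nat
  have hreg := fun n => stein_reg B C b hw hN y hy (hep n)
  rw [← hc] at hreg
  set V : (Fin m → ℝ) → ℝ := fun z => C *ᵥ z ⬝ᵥ C *ᵥ z with hV
  have hVi : Integrable V (_root_.stdGaussian m) := integrable_linear_sq C
  have hV0 : ∀ z, 0 ≤ V z := fun z => dot_self_nonneg _
  -- Cauchy-Schwarz followed by the AM-GM inequality with weight `c`, so that `c / 2` can be absorbed.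
  have hnum : ∀ z, |y z ⬝ᵥ C *ᵥ z| ≤ c / 2 + V z / (2 * c) * (y z ⬝ᵥ y z) := by
    intro z
    have h := Finset.sum_mul_sq_le_sq_mul_sq Finset.univ (y z) (C *ᵥ z)
    have h' : (y z ⬝ᵥ C *ᵥ z) ^ 2 ≤ (y z ⬝ᵥ y z) * V z := by
      simpa [dotProduct, hV, pow_two] using h
    refine abs_le_of_sq_le_sq (h'.trans ?_) (by have := hV0 z; have := hQ0 z; positivity)
    have h2 : (c / 2 + V z / (2 * c) * (y z ⬝ᵥ y z)) ^ 2 - (y z ⬝ᵥ y z) * V z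
        = (c / 2 - V z / (2 * c) * (y z ⬝ᵥ y z)) ^ 2 := by
      field_simp; ring
    nlinarith [sq_nonneg (c / 2 - V z / (2 * c) * (y z ⬝ᵥ y z))]
  have hpt : ∀ ε : ℝ, 0 ≤ ε → ∀ z, 0 < y z ⬝ᵥ y z + ε →
      |(y z ⬝ᵥ C *ᵥ z) / (y z ⬝ᵥ y z + ε)| ≤ c / 2 * (1 / (y z ⬝ᵥ y z + ε)) + V z / (2 * c) := by
    intro ε hε z hp
    rw [abs_div, abs_of_pos hp, div_le_iff₀ hp]
    refine (hnum z).trans ?_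
    have h1 : (c / 2 * (1 / (y z ⬝ᵥ y z + ε)) + V z / (2 * c)) * (y z ⬝ᵥ y z + ε)
        = c / 2 + V z / (2 * c) * (y z ⬝ᵥ y z) + V z / (2 * c) * ε := by
      field_simp; ring
    have : 0 ≤ V z / (2 * c) * ε := by have := hV0 z; positivity
    linarith
  have hbound : ∀ n, ∫ z, 1 / (y z ⬝ᵥ y z + e n) ∂(_root_.stdGaussian m)
      ≤ (∫ z, V z ∂(_root_.stdGaussian m)) / c ^ 2 := by
    intro n
    obtain ⟨h1, h2, h3⟩ := hreg n
    have h4 : ∫ z, (y z ⬝ᵥ C *ᵥ z) / (y z ⬝ᵥ y z + e n) ∂(_root_.stdGaussian m) ≤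
        ∫ z, (c / 2 * (1 / (y z ⬝ᵥ y z + e n)) + V z / (2 * c)) ∂(_root_.stdGaussian m) :=
      integral_mono h2 ((h1.const_mul _).add (hVi.div_const _)) fun z =>
        (le_abs_self _).trans (hpt _ (hep n).le z (by linarith [hQ0 z, hep n]))
    rw [integral_add (h1.const_mul _) (hVi.div_const _), integral_const_mul,
      integral_div] at h4
    rw [le_div_iff₀ (by positivity)]
    have h5 := h3.trans h4
    have h6 : c / 2 * ∫ z, 1 / (y z ⬝ᵥ y z + e n) ∂(_root_.stdGaussian m) ≤
      (∫ z, V z ∂(_root_.stdGaussian m)) / (2 * c) := by linarith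
    rw [le_div_iff₀ (by positivity)] at h6
    linarith
  have hQc : Continuous fun z => y z ⬝ᵥ y z := hyc.dotProduct hyc
  -- Fatou in `ℝ≥0∞`, where `0⁻¹ = ⊤`: finiteness also shows that `y` is almost surely nonzero.
  have hlin : ∫⁻ z, (ENNReal.ofReal (y z ⬝ᵥ y z))⁻¹ ∂(_root_.stdGaussian m) < ⊤ := by
    have hlim : ∀ z, liminf (fun n => (ENNReal.ofReal (y z ⬝ᵥ y z + e n))⁻¹) atTop
        = (ENNReal.ofReal (y z ⬝ᵥ y z))⁻¹ := by
      intro z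
      refine Tendsto.liminf_eq ?_
      refine (ENNReal.tendsto_ofReal ?_).inv
      simpa using hel.const_add (y z ⬝ᵥ y z)
    calc ∫⁻ z, (ENNReal.ofReal (y z ⬝ᵥ y z))⁻¹ ∂(_root_.stdGaussian m)
        = ∫⁻ z, liminf (fun n => (ENNReal.ofReal (y z ⬝ᵥ y z + e n))⁻¹) atTop
            ∂(_root_.stdGaussian m) := by simp only [hlim]
      _ ≤ liminf (fun n => ∫⁻ z, (ENNReal.ofReal (y z ⬝ᵥ y z + e n))⁻¹
            ∂(_root_.stdGaussian m)) atTop := lintegral_liminf_le fun n =>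
          ((hQc.add continuous_const).measurable.ennreal_ofReal).inv
      _ ≤ ENNReal.ofReal ((∫ z, V z ∂(_root_.stdGaussian m)) / c ^ 2) := by
          refine liminf_le_of_le (by isBoundedDefault) fun r hr => ?_
          obtain ⟨n, hn⟩ := hr.exists
          refine hn.trans ?_
          have hpos : ∀ z, 0 < y z ⬝ᵥ y z + e n := fun z => by linarith [hQ0 z, hep n]
          calc ∫⁻ z, (ENNReal.ofReal (y z ⬝ᵥ y z + e n))⁻¹ ∂(_root_.stdGaussian m)
              = ∫⁻ z, ENNReal.ofReal (1 / (y z ⬝ᵥ y z + e n)) ∂(_root_.stdGaussian m) := by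
                refine lintegral_congr fun z => ?_
                rw [one_div, ENNReal.ofReal_inv_of_pos (hpos z)]
            _ = ENNReal.ofReal (∫ z, 1 / (y z ⬝ᵥ y z + e n) ∂(_root_.stdGaussian m)) :=
                (ofReal_integral_eq_lintegral_ofReal (hreg n).1
                  (ae_of_all _ fun z => (one_div_pos.2 (hpos z)).le)).symm
            _ ≤ _ := ENNReal.ofReal_le_ofReal (hbound n)
      _ < ⊤ := ENNReal.ofReal_lt_top
  have hae : ∀ᵐ z ∂(_root_.stdGaussian m), 0 < y z ⬝ᵥ y z := by
    filter_upwards [ae_lt_top hQc.measurable.ennreal_ofReal.inv hlin.ne] with z hz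
    simpa using hz
  have hint : Integrable (fun z => 1 / (y z ⬝ᵥ y z)) (_root_.stdGaussian m) := by
    have hm : Measurable fun z => 1 / (y z ⬝ᵥ y z) := measurable_const.div hQc.measurable
    refine ⟨hm.aestronglyMeasurable, ?_⟩
    rw [hasFiniteIntegral_iff_ofReal (ae_of_all _ fun z => one_div_nonneg.2 (hQ0 z))]
    refine lt_of_le_of_lt (lintegral_mono_ae ?_) hlin
    filter_upwards [hae] with z hz
    rw [one_div, ENNReal.ofReal_inv_of_pos hz]
  have hdom : Integrable (fun z => c / 2 * (1 / (y z ⬝ᵥ y z)) + V z / (2 * c))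
      (_root_.stdGaussian m) := (hint.const_mul _).add (hVi.div_const _)
  have hmono : ∀ n z, 0 < y z ⬝ᵥ y z → 1 / (y z ⬝ᵥ y z + e n) ≤ 1 / (y z ⬝ᵥ y z) :=
    fun n z hz => one_div_le_one_div_of_le hz (by linarith [hep n])
  have hden : ∀ z, Tendsto (fun n => y z ⬝ᵥ y z + e n) atTop (𝓝 (y z ⬝ᵥ y z)) := fun z => by
    simpa using hel.const_add (y z ⬝ᵥ y z)
  have hint2 : Integrable (fun z => (y z ⬝ᵥ C *ᵥ z) / (y z ⬝ᵥ y z)) (_root_.stdGaussian m) := by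
    refine hdom.mono' ?_ ?_
    · refine (Measurable.div ?_ hQc.measurable).aestronglyMeasurable
      exact (hyc.dotProduct
        (Continuous.matrix_mulVec continuous_const continuous_id)).measurable
    · filter_upwards [hae] with z hz
      simpa [abs_div] using hpt 0 le_rfl z (by simpa using hz)
  refine ⟨hint, hint2, ?_⟩
  have t1 : Tendsto (fun n => ∫ z, 1 / (y z ⬝ᵥ y z + e n) ∂(_root_.stdGaussian m)) atTop
      (𝓝 (∫ z, 1 / (y z ⬝ᵥ y z) ∂(_root_.stdGaussian m))) := by
    refine tendsto_integral_of_dominated_convergence _ (fun n => (hreg n).1.1) hint ?_ ?_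
    · intro n
      filter_upwards [hae] with z hz
      rw [Real.norm_of_nonneg (one_div_nonneg.2 (by linarith [hep n]))]
      exact hmono n z hz
    · filter_upwards [hae] with z hz
      exact tendsto_const_nhds.div (hden z) hz.ne'
  have t2 : Tendsto (fun n => ∫ z, (y z ⬝ᵥ C *ᵥ z) / (y z ⬝ᵥ y z + e n)
      ∂(_root_.stdGaussian m)) atTop
      (𝓝 (∫ z, (y z ⬝ᵥ C *ᵥ z) / (y z ⬝ᵥ y z) ∂(_root_.stdGaussian m))) := by
    refine tendsto_integral_of_dominated_convergence _ (fun n => (hreg n).2.1.1) hdom ?_ ?_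
    · intro n
      filter_upwards [hae] with z hz
      refine (hpt _ (hep n).le z (by linarith [hep n])).trans ?_
      have := mul_le_mul_of_nonneg_left (hmono n z hz) (half_pos hc0).le
      linarith
    · filter_upwards [hae] with z hz
      exact tendsto_const_nhds.div (hden z) hz.ne'
  exact le_of_tendsto_of_tendsto' (t1.const_mul c) t2 fun n => (hreg n).2.2

/-! ### The risk bound -/

/-- Theorem B.1 (thm:ests) of the paper in Gaussian-limit form: risk bound for the
semi-modular posterior mean with the data-driven weight `γ/Q`. -/
theorem stmt_11 {m d₁ : ℕ} (hd₁ : 3 ≤ d₁)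
    (Ω : Matrix (Fin m) (Fin m) ℝ) (hΩ : Ω.PosSemidef)
    (μ : Measure (Fin m → ℝ)) (hμ : IsGaussianLaw μ 0 Ω)
    (τ : Fin m → ℝ)
    (Γ₁ Γ : Matrix (Fin d₁) (Fin m) ℝ) (hΓ₁τ : Γ₁.mulVec τ = 0)
    (Υ : Matrix (Fin d₁) (Fin d₁) ℝ) (hΥ : Υ.PosDef) (hΥsymm : Υ.IsSymm)
    (M : Matrix (Fin d₁) (Fin d₁) ℝ) (hMdef : M = (Γ₁ - Γ) * Ω * (Γ₁ - Γ)ᵀ)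
    (hMcross : Γ₁ * Ω * (Γ₁ - Γ)ᵀ = M)
    (P : Matrix (Fin m) (Fin m) ℝ) (hPdef : P = (Γ₁ - Γ)ᵀ * Υ * (Γ₁ - Γ))
    (hMpd : M.PosDef)
    (W : Matrix (Fin d₁) (Fin d₁) ℝ) (hWdef : W = Υ * M)
    (hW : 0 < W.trace - 2 * matOpNorm W)
    (γ : ℝ) (hγ0 : 0 ≤ γ) (hγ2 : γ ≤ 2 * (W.trace - 2 * matOpNorm W)) :
    ∀ Q : (Fin m → ℝ) → ℝ, Q = (fun x => (x + τ) ⬝ᵥ P.mulVec (x + τ)) →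
    ∀ Ψ : (Fin m → ℝ) → Fin d₁ → ℝ,
      Ψ = (fun x => Γ₁.mulVec (x + τ) - (γ / Q x) • (Γ₁ - Γ).mulVec (x + τ)) →
      ∫ x, Ψ x ⬝ᵥ Υ.mulVec (Ψ x) ∂μ
        ≤ (Υ * Γ₁ * Ω * Γ₁ᵀ).trace
          - γ * (2 * (W.trace - 2 * matOpNorm W) - γ) * ∫ x, 1 / Q x ∂μ := by
  rintro Q hQ Ψ hΨ
  obtain ⟨A, hA, hμA⟩ := hμ
  obtain ⟨S, hS⟩ := exists_factor hΥ.posSemidef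
  have hSdet : IsUnit S.det := by
    have h := hΥ.det_pos
    rw [hS, Matrix.det_mul] at h
    exact isUnit_iff_ne_zero.2 (right_ne_zero_of_mul h.ne')
  set D := Γ₁ - Γ with hD
  set y : (Fin m → ℝ) → Fin d₁ → ℝ := fun z => (S * D * A) *ᵥ z + (S * D) *ᵥ τ with hy
  have hyz : ∀ z, S *ᵥ D *ᵥ (A *ᵥ z + τ) = y z := by
    intro z
    simp only [hy, Matrix.mulVec_add, Matrix.mulVec_mulVec, Matrix.mul_assoc]
  have hdotS : ∀ u v : Fin d₁ → ℝ, u ⬝ᵥ Υ *ᵥ v = S *ᵥ u ⬝ᵥ S *ᵥ v := by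
    intro u v
    rw [hS, ← Matrix.mulVec_mulVec, Matrix.dotProduct_mulVec, Matrix.vecMul_transpose]
  have hQy : ∀ z, Q (A *ᵥ z) = y z ⬝ᵥ y z := by
    intro z
    rw [hQ, hPdef]
    simp only
    rw [Matrix.mul_assoc, ← Matrix.mulVec_mulVec, Matrix.dotProduct_mulVec,
      Matrix.vecMul_transpose, ← Matrix.mulVec_mulVec, hdotS, hyz]
  have hCB : (S * Γ₁ * A) * (S * D * A)ᵀ = S * M * Sᵀ := by
    rw [← hMcross, ← hA]
    simp only [Matrix.transpose_mul, Matrix.mul_assoc]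
  have hCC : ((S * Γ₁ * A) * (S * Γ₁ * A)ᵀ).trace = (Υ * Γ₁ * Ω * Γ₁ᵀ).trace := by
    have h : (S * Γ₁ * A) * (S * Γ₁ * A)ᵀ = (S * Γ₁ * Ω * Γ₁ᵀ) * Sᵀ := by
      rw [← hA]; simp only [Matrix.transpose_mul, Matrix.mul_assoc]
    rw [h, Matrix.trace_mul_comm, hS]
    simp only [Matrix.mul_assoc]
  have htr : ((S * Γ₁ * A) * (S * D * A)ᵀ).trace = W.trace := by
    rw [hCB, Matrix.trace_mul_comm, hWdef, hS, Matrix.mul_assoc]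
  have hMs : M.IsSymm := by
    have h := hMpd.isHermitian.eq
    rwa [Matrix.conjTranspose_eq_transpose_of_trivial] at h
  have hN : ∀ v, v ⬝ᵥ ((S * Γ₁ * A) * (S * D * A)ᵀ) *ᵥ v ≤ matOpNorm W * (v ⬝ᵥ v) := by
    intro v
    rw [hCB, hWdef, hS]
    exact spectral_bound S M hSdet hMs v
  obtain ⟨i1, i2, hle⟩ := stein_quad (S * D * A) (S * Γ₁ * A) ((S * D) *ᵥ τ)
    (w := matOpNorm W) (norm_nonneg _) hN rfl (by rw [htr]; exact hW) y hy
  rw [htr] at hle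
  have hAm : AEMeasurable (fun x => 0 + A.mulVec x) (_root_.stdGaussian m) :=
    (continuous_const.add
      (Continuous.matrix_mulVec continuous_const continuous_id)).measurable.aemeasurable
  have hQm : Measurable Q := by
    rw [hQ]
    exact ((continuous_id.add continuous_const).dotProduct (Continuous.matrix_mulVec
      continuous_const (continuous_id.add continuous_const))).measurable
  have hQi : Measurable fun x => 1 / Q x := measurable_const.div hQm
  have hΨm : Measurable Ψ := by
    rw [hΨ]
    refine Measurable.sub ?_ (Measurable.smul (measurable_const.div hQm) ?_) <;>
    exact (Continuous.matrix_mulVec continuous_const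
      (continuous_id.add continuous_const)).measurable
  have hLm : Measurable fun x => Ψ x ⬝ᵥ Υ *ᵥ Ψ x :=
    (Continuous.dotProduct continuous_id
      (Continuous.matrix_mulVec continuous_const continuous_id)).measurable.comp hΨm
  have hloss : ∀ z, Ψ (A *ᵥ z) ⬝ᵥ Υ *ᵥ Ψ (A *ᵥ z) =
      (S * Γ₁ * A) *ᵥ z ⬝ᵥ (S * Γ₁ * A) *ᵥ z
        - 2 * γ * ((y z ⬝ᵥ (S * Γ₁ * A) *ᵥ z) / (y z ⬝ᵥ y z))
        + γ ^ 2 * (1 / (y z ⬝ᵥ y z)) := by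
    intro z
    have h1 : S *ᵥ Ψ (A *ᵥ z) = (S * Γ₁ * A) *ᵥ z - (γ / (y z ⬝ᵥ y z)) • y z := by
      rw [hΨ]
      simp only [hQy]
      rw [Matrix.mulVec_sub, Matrix.mulVec_smul, hyz, Matrix.mulVec_add, hΓ₁τ, add_zero]
      simp only [Matrix.mulVec_mulVec, Matrix.mul_assoc]
    rw [hdotS, h1]
    simp only [sub_dotProduct, dotProduct_sub, smul_dotProduct, dotProduct_smul, smul_eq_mul,
      dotProduct_comm _ (y z)]
    -- On `y z = 0` both sides agree because of the convention `x / 0 = 0`.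
    by_cases h0 : y z ⬝ᵥ y z = 0
    · simp [h0]
    · field_simp
      ring
  rw [hμA, integral_map hAm hLm.aestronglyMeasurable,
    integral_map hAm hQi.aestronglyMeasurable]
  simp only [zero_add, hloss, hQy]
  have i3 := i2.const_mul (2 * γ)
  have i4 : Integrable (fun z => (S * Γ₁ * A) *ᵥ z ⬝ᵥ (S * Γ₁ * A) *ᵥ z
      - 2 * γ * ((y z ⬝ᵥ (S * Γ₁ * A) *ᵥ z) / (y z ⬝ᵥ y z))) (_root_.stdGaussian m) :=
    (integrable_linear_sq _).sub i3
  rw [integral_add i4 (i1.const_mul _), integral_sub (integrable_linear_sq _) i3, integral_const_mul,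
    integral_const_mul, integral_linear_sq, hCC]
  nlinarith [mul_le_mul_of_nonneg_left hle hγ0]
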